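/- arXiv:1906.04477 — 2 statements merged into one kernel-verified Lean document; each statement's English description precedes it below -/
import Mathlib

section
/- (Proposition 1, forward direction and equality of optimal values.) Let d : ℕ, let S be a score function on binary adjacency matrices of size d, let S* be the minimum of S over acyclic binary adjacency matrices, and let hmin > 0 satisfy hmin ≤ h(A) for every non-acyclic binary adjacency matrix A. Assume S_L ∈ ℝ satisfies S_L ≤ S(A) for every binary adjacency matrix A, S_U ∈ ℝ satisfies S* ≤ S_U, and the penalty weights satisfy λ1 ≥ 0, λ2 ≥ 0 and λ1 + λ2·hmin ≥ S_U − S_L. Then every acyclic binary adjacency matrix A₀ with S(A₀) = S* minimizes the penalized objective F over all binary adjacency matrices, and the minimum of F over all binary adjacency matrices equals S*. -/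
/-- A binary adjacency matrix: every entry is 0 or 1. -/
def IsBinary {d : ℕ} (A : Matrix (Fin d) (Fin d) ℝ) : Prop :=
  ∀ i j, A i j = 0 ∨ A i j = 1

/-- The directed graph induced by `A` (edge `i → j` iff `A i j = 1`) is acyclic. -/
def IsAcyclicMat {d : ℕ} (A : Matrix (Fin d) (Fin d) ℝ) : Prop :=
  Irreflexive (Relation.TransGen (fun i j => A i j = 1))

/-- The smooth acyclicity function `h(A) = trace (exp A) - d`. -/
noncomputable def hAcyc {d : ℕ} (A : Matrix (Fin d) (Fin d) ℝ) : ℝ :=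
  Matrix.trace (NormedSpace.exp A) - d

open Classical in
/-- The penalized objective `F(A) = S(A) + λ₁·1[A ∉ DAGs] + λ₂·h(A)`. -/
noncomputable def penObj {d : ℕ} (S : Matrix (Fin d) (Fin d) ℝ → ℝ) (lam1 lam2 : ℝ)
    (A : Matrix (Fin d) (Fin d) ℝ) : ℝ :=
  S A + lam1 * (if IsAcyclicMat A then (0 : ℝ) else 1) + lam2 * hAcyc A

theorem pow_entry_transGen {d : ℕ} (A : Matrix (Fin d) (Fin d) ℝ) (hA : IsBinary A) (n : ℕ) :
    ∀ i j, (A ^ (n + 1)) i j ≠ 0 → Relation.TransGen (fun i j => A i j = 1) i j := by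
  induction n with
  | zero =>
    intro i j h
    rw [zero_add, pow_one] at h
    exact Relation.TransGen.single ((hA i j).resolve_left h)
  | succ n ih =>
    intro i j h
    rw [pow_succ, Matrix.mul_apply] at h
    obtain ⟨k, _, hk⟩ := Finset.exists_ne_zero_of_sum_ne_zero h
    exact Relation.TransGen.tail (ih i k (left_ne_zero_of_mul hk))
      ((hA k j).resolve_left (right_ne_zero_of_mul hk))

attribute [local instance] Matrix.linftyOpNormedRing Matrix.linftyOpNormedAlgebra in
theorem exp_hasSum_mat {d : ℕ} (A : Matrix (Fin d) (Fin d) ℝ) :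
    HasSum (fun n : ℕ => ((n.factorial : ℝ)⁻¹) • A ^ n) (NormedSpace.exp A) :=
  NormedSpace.exp_series_hasSum_exp' (𝕂 := ℝ) A

theorem hAcyc_eq_zero {d : ℕ} (A : Matrix (Fin d) (Fin d) ℝ) (hA : IsBinary A)
    (hac : IsAcyclicMat A) : hAcyc A = 0 := by
  have hdiag : ∀ i, (NormedSpace.exp A) i i = 1 := by
    intro i
    have h1 : HasSum (fun n : ℕ => (((n.factorial : ℝ)⁻¹) • A ^ n) i i)
        ((NormedSpace.exp A) i i) :=
      Pi.hasSum.1 (Pi.hasSum.1 (exp_hasSum_mat A) i) i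
    have h2 : HasSum (fun n : ℕ => (((n.factorial : ℝ)⁻¹) • A ^ n) i i)
        ((((Nat.factorial 0 : ℝ)⁻¹) • A ^ 0) i i) := by
      apply hasSum_single
      intro n hn
      obtain ⟨m, rfl⟩ := Nat.exists_eq_succ_of_ne_zero hn
      have : (A ^ (m + 1)) i i = 0 := by
        by_contra h
        exact (show ∀ x, ¬ Relation.TransGen (fun i j => A i j = 1) x x from
          fun x hx => by first | exact hac x hx | exact hac.irrefl x hx) i
            (pow_entry_transGen A hA m i i h)
      rw [Matrix.smul_apply, Nat.succ_eq_add_one, this, smul_zero]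
    rw [h1.unique h2]
    simp
  simp [hAcyc, Matrix.trace, hdiag]

theorem prop1_forward (d : ℕ) (S : Matrix (Fin d) (Fin d) ℝ → ℝ)
    (Sstar SL SU hmin lam1 lam2 : ℝ)
    (hSstar : IsLeast {s : ℝ | ∃ A : Matrix (Fin d) (Fin d) ℝ,
        IsBinary A ∧ IsAcyclicMat A ∧ S A = s} Sstar)
    (hminpos : 0 < hmin)
    (hminle : ∀ A : Matrix (Fin d) (Fin d) ℝ, IsBinary A → ¬ IsAcyclicMat A → hmin ≤ hAcyc A)
    (hSL : ∀ A : Matrix (Fin d) (Fin d) ℝ, IsBinary A → SL ≤ S A)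
    (hSU : Sstar ≤ SU)
    (hl1 : 0 ≤ lam1) (hl2 : 0 ≤ lam2)
    (hpen : SU - SL ≤ lam1 + lam2 * hmin) :
    (∀ A₀ : Matrix (Fin d) (Fin d) ℝ, IsBinary A₀ → IsAcyclicMat A₀ → S A₀ = Sstar →
      ∀ A : Matrix (Fin d) (Fin d) ℝ, IsBinary A →
        penObj S lam1 lam2 A₀ ≤ penObj S lam1 lam2 A) ∧
    IsLeast {v : ℝ | ∃ A : Matrix (Fin d) (Fin d) ℝ,
        IsBinary A ∧ penObj S lam1 lam2 A = v} Sstar := by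
  have hF0 : ∀ A : Matrix (Fin d) (Fin d) ℝ, IsBinary A → IsAcyclicMat A →
      penObj S lam1 lam2 A = S A := by
    intro A hA hac
    simp [penObj, hac, hAcyc_eq_zero A hA hac]
  have hlow : ∀ A : Matrix (Fin d) (Fin d) ℝ, IsBinary A → Sstar ≤ penObj S lam1 lam2 A := by
    intro A hA
    by_cases hac : IsAcyclicMat A
    · rw [hF0 A hA hac]
      exact hSstar.2 ⟨A, hA, hac, rfl⟩
    · have h1 := mul_le_mul_of_nonneg_left (hminle A hA hac) hl2
      have h2 := hSL A hA
      simp only [penObj, hac, if_false]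
      linarith
  refine ⟨fun A₀ h0 hac hS A hA => ?_, ?_, ?_⟩
  · rw [hF0 A₀ h0 hac, hS]
    exact hlow A hA
  · obtain ⟨A, hA, hac, hS⟩ := hSstar.1
    exact ⟨A, hA, (hF0 A hA hac).trans hS⟩
  · rintro v ⟨A, hA, rfl⟩
    exact hlow A hA
end

section
/- (Existence and positivity of hmin, the premise of Proposition 1: 'Let hmin > 0 be the minimum of h(A) over all directed cyclic graphs'.) Let d : ℕ with d ≥ 2. Then there exists a binary adjacency matrix of size d that is not acyclic, and there exists a real number hmin > 0 such that hmin ≤ h(A) for every binary adjacency matrix A of size d that is not acyclic. -/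
theorem binary_pow_nonneg {d : ℕ} {A : Matrix (Fin d) (Fin d) ℝ} (hA : IsBinary A) (n : ℕ) :
    ∀ i j, 0 ≤ (A ^ n) i j := by
  induction n with
  | zero =>
    intro i j
    rw [pow_zero, Matrix.one_apply]
    split_ifs <;> norm_num
  | succ k ih =>
    intro i j
    rw [pow_succ, Matrix.mul_apply]
    refine Finset.sum_nonneg fun l _ => mul_nonneg (ih i l) ?_
    rcases hA l j with h | h <;> rw [h] <;> norm_num

theorem exists_pow_pos {d : ℕ} {A : Matrix (Fin d) (Fin d) ℝ} (hA : IsBinary A) {i j : Fin d}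
    (h : Relation.TransGen (fun i j => A i j = 1) i j) : ∃ n : ℕ, n ≠ 0 ∧ 0 < (A ^ n) i j := by
  induction h with
  | single h => exact ⟨1, one_ne_zero, by rw [pow_one, h]; norm_num⟩
  | @tail b c _ h ih =>
    obtain ⟨n, _, hn⟩ := ih
    refine ⟨n + 1, Nat.succ_ne_zero n, ?_⟩
    rw [pow_succ, Matrix.mul_apply]
    refine Finset.sum_pos' (fun l _ => mul_nonneg (binary_pow_nonneg hA n i l) ?_)
      ⟨b, Finset.mem_univ b, ?_⟩
    · rcases hA l c with h | h <;> rw [h] <;> norm_num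
    · rw [h, mul_one]
      exact hn

theorem hasSum_trace_exp {d : ℕ} (A : Matrix (Fin d) (Fin d) ℝ) :
    HasSum (fun n : ℕ => ((n.factorial : ℝ)⁻¹) * (A ^ n).trace)
      (Matrix.trace (NormedSpace.exp A)) := by
  letI : NormedRing (Matrix (Fin d) (Fin d) ℝ) := Matrix.linftyOpNormedRing
  letI : NormedAlgebra ℝ (Matrix (Fin d) (Fin d) ℝ) := Matrix.linftyOpNormedAlgebra
  have h := NormedSpace.exp_series_hasSum_exp' (𝕂 := ℝ) A
  have h2 := h.map (Matrix.traceAddMonoidHom (Fin d) ℝ) (continuous_id.matrix_trace)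
  convert h2 using 1
  · funext n
    simp [Matrix.trace_smul]
  · rfl

theorem hAcyc_pos {d : ℕ} {A : Matrix (Fin d) (Fin d) ℝ} (hA : IsBinary A)
    (hc : ¬ IsAcyclicMat A) : 0 < hAcyc A := by
  have hex : ∃ i, Relation.TransGen (fun i j => A i j = 1) i i := by
    by_contra hne
    exact hc fun i hi => hne ⟨i, hi⟩
  obtain ⟨i, hi⟩ := hex
  obtain ⟨n, hn0, hn⟩ := exists_pow_pos hA hi
  have htr : 0 < (A ^ n).trace :=
    Finset.sum_pos' (fun l _ => binary_pow_nonneg hA n l l) ⟨i, Finset.mem_univ i, hn⟩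
  have hnn : ∀ m : ℕ, 0 ≤ (A ^ m).trace := fun m =>
    Finset.sum_nonneg fun l _ => binary_pow_nonneg hA m l l
  have hle := sum_le_hasSum {0, n} (fun m _ => mul_nonneg (by positivity)
    (hnn m)) (hasSum_trace_exp A)
  rw [Finset.sum_pair hn0.symm] at hle
  have hp : 0 < ((n.factorial : ℝ)⁻¹) * (A ^ n).trace := by positivity
  simp only [Nat.factorial_zero, Nat.cast_one, inv_one, pow_zero, Matrix.trace_one,
    Fintype.card_fin, one_mul] at hle
  unfold hAcyc
  linarith

theorem finite_binary (d : ℕ) : {A : Matrix (Fin d) (Fin d) ℝ | IsBinary A}.Finite := by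
  refine (Set.finite_range (fun f : Fin d → Fin d → Bool =>
    (Matrix.of fun i j => if f i j then (1 : ℝ) else 0))).subset ?_
  intro A hA
  classical
  refine ⟨fun i j => decide (A i j = 1), ?_⟩
  ext i j
  rcases hA i j with h | h <;> simp [h]

theorem exists_hmin (d : ℕ) (hd : 2 ≤ d) :
    (∃ A : Matrix (Fin d) (Fin d) ℝ, IsBinary A ∧ ¬ IsAcyclicMat A) ∧
    (∃ hmin : ℝ, 0 < hmin ∧
      ∀ A : Matrix (Fin d) (Fin d) ℝ, IsBinary A → ¬ IsAcyclicMat A → hmin ≤ hAcyc A) := by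
  have hne : ∃ A : Matrix (Fin d) (Fin d) ℝ, IsBinary A ∧ ¬ IsAcyclicMat A := by
    refine ⟨Matrix.of fun _ _ => 1, fun _ _ => Or.inr rfl, fun h => ?_⟩
    exact h (⟨0, by omega⟩ : Fin d) (Relation.TransGen.single rfl)
  refine ⟨hne, ?_⟩
  have hfin : {A : Matrix (Fin d) (Fin d) ℝ | IsBinary A ∧ ¬ IsAcyclicMat A}.Finite :=
    (finite_binary d).subset fun A hA => hA.1
  obtain ⟨B, hB, hmin⟩ := Set.exists_min_image _ hAcyc hfin hne
  exact ⟨hAcyc B, hAcyc_pos hB.1 hB.2, fun A h1 h2 => hmin A ⟨h1, h2⟩⟩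
end
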